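/- Let E := {(r cos φ, r sin φ) : φ ≥ 2π, ((φ+π)(log(φ+π))²)^{-1} ≤ r < (φ (log φ)²)^{-1}} be the logarithmically corrected spiral domain in ℝ². Then there exists C > 0 such that for all δ ∈ (0, 1), |(∂E)^δ| ≤ C δ, where (∂E)^δ := {x ∈ ℝ² : dist(x, ∂E) < δ} and |·| is two-dimensional Lebesgue measure. -/

import Mathlib

open MeasureTheory

/-- The logarithmically corrected spiral domain `E` in the plane,
described in polar coordinates. -/
def logSpiral : Set (EuclideanSpace ℝ (Fin 2)) :=
  {p | ∃ r φ : ℝ, 2 * Real.pi ≤ φ ∧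
      1 / ((φ + Real.pi) * (Real.log (φ + Real.pi)) ^ 2) ≤ r ∧
      r < 1 / (φ * (Real.log φ) ^ 2) ∧
      p 0 = r * Real.cos φ ∧ p 1 = r * Real.sin φ}

namespace LogSpiralAux

open Complex in
/-- spiral parametrised by s = 1 / log φ -/
noncomputable def g (s : ℝ) : ℂ := (s : ℂ) ^ 2 * cexp (-(s : ℂ)⁻¹ + I * cexp ((s : ℂ)⁻¹))

lemma g_lip (s t : ℝ) (hs : s ∈ Set.Ioc (0:ℝ) 1) (ht : t ∈ Set.Ioc (0:ℝ) 1) :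
    dist (g s) (g t) ≤ 4 * |s - t| := by
  have hd : ∀ x ∈ Set.Ioc (0:ℝ) 1, HasDerivWithinAt g
      (Complex.exp (-(x : ℂ)⁻¹ + Complex.I * Complex.exp ((x : ℂ)⁻¹)) *
        (2 * x + 1 - Complex.I * Complex.exp ((x : ℂ)⁻¹))) (Set.Ioc (0:ℝ) 1) x := by
    intro x hx
    have hx0 : (x : ℂ) ≠ 0 := by exact_mod_cast hx.1.ne'
    have h1 : HasDerivAt (fun z : ℂ => z ^ 2 * Complex.exp (-z⁻¹ + Complex.I * Complex.exp (z⁻¹)))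
      (Complex.exp (-(x : ℂ)⁻¹ + Complex.I * Complex.exp ((x : ℂ)⁻¹)) *
        (2 * x + 1 - Complex.I * Complex.exp ((x : ℂ)⁻¹))) (x : ℂ) := by
      have hi := hasDerivAt_inv hx0
      have := (hasDerivAt_pow 2 (x : ℂ)).mul ((hi.neg.add (hi.cexp.const_mul Complex.I)).cexp)
      refine HasDerivAt.congr_deriv (f := fun z : ℂ => z ^ 2 *
        Complex.exp (-z⁻¹ + Complex.I * Complex.exp (z⁻¹))) this ?_
      simp only [Pi.add_apply, Pi.neg_apply]
      generalize Complex.exp (-(x : ℂ)⁻¹ + Complex.I * Complex.exp ((x : ℂ)⁻¹)) = a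
      generalize Complex.exp ((x : ℂ)⁻¹) = b
      push_cast
      field_simp
      ring
    exact (h1.comp_ofReal).hasDerivWithinAt
  have hb : ∀ x ∈ Set.Ioc (0:ℝ) 1, ‖(Complex.exp (-(x : ℂ)⁻¹ + Complex.I * Complex.exp ((x : ℂ)⁻¹)) *
        (2 * x + 1 - Complex.I * Complex.exp ((x : ℂ)⁻¹)))‖ ≤ 4 := by
    intro x hx
    have e1 : Complex.exp ((x : ℂ)⁻¹) = ((Real.exp x⁻¹ : ℝ) : ℂ) := by push_cast; rfl
    rw [norm_mul, Complex.norm_exp, e1]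
    have hre : (-(x : ℂ)⁻¹ + Complex.I * ((Real.exp x⁻¹ : ℝ) : ℂ)).re = -x⁻¹ := by
      rw [← Complex.ofReal_inv]
      simp only [Complex.add_re, Complex.neg_re, Complex.ofReal_re, Complex.mul_re,
        Complex.I_re, Complex.I_im, Complex.ofReal_im]
      ring
    rw [hre]
    have hn : ‖(2 * (x:ℂ) + 1 - Complex.I * ((Real.exp x⁻¹ : ℝ) : ℂ))‖ ≤ 3 + Real.exp x⁻¹ := by
      refine (norm_sub_le _ _).trans ?_
      gcongr
      · have : (2 * (x:ℂ) + 1) = ((2 * x + 1 : ℝ) : ℂ) := by push_cast; rfl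
        rw [this, Complex.norm_real, Real.norm_eq_abs, abs_of_pos (by linarith [hx.1])]
        linarith [hx.2]
      · rw [norm_mul, Complex.norm_I, Complex.norm_real, Real.norm_eq_abs, Real.abs_exp, one_mul]
    have h1 : Real.exp (-x⁻¹) ≤ 1 := Real.exp_le_one_iff.2 (by have := inv_pos.2 hx.1; linarith)
    calc _ ≤ Real.exp (-x⁻¹) * (3 + Real.exp x⁻¹) := by gcongr
      _ = 3 * Real.exp (-x⁻¹) + 1 := by rw [mul_add, ← Real.exp_add]; simp; ring
      _ ≤ 4 := by linarith
  have := (convex_Ioc (0:ℝ) 1).norm_image_sub_le_of_norm_hasDerivWithin_le hd hb ht hs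
  rwa [dist_eq_norm]

lemma cover (h : ℝ → EuclideanSpace ℝ (Fin 2)) (K : ℝ) (hK : 0 ≤ K)
    (hl : ∀ s t : ℝ, s ∈ Set.Ioc (0:ℝ) 1 → t ∈ Set.Ioc (0:ℝ) 1 → dist (h s) (h t) ≤ K * |s - t|)
    (δ : ℝ) (h0 : 0 < δ) (h1 : δ < 1) :
    volume {x | ∃ s ∈ Set.Ioc (0:ℝ) 1, dist x (h s) < δ}
      ≤ ENNReal.ofReal (3 * Real.pi * (1 + K) ^ 2 * δ) := by
  set N := ⌈1 / δ⌉₊ with hN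
  have hN1 : 1 / δ ≤ N := Nat.le_ceil _
  have hN2 : (N:ℝ) < 1 / δ + 1 := Nat.ceil_lt_add_one (by positivity)
  have hNp : (0:ℝ) < N := lt_of_lt_of_le (by positivity) hN1
  have hsub : {x | ∃ s ∈ Set.Ioc (0:ℝ) 1, dist x (h s) < δ} ⊆
      ⋃ j ∈ Finset.range (N + 1), Metric.ball (h ((j:ℝ) / N)) ((1 + K) * δ) := by
    rintro x ⟨s, hs, hx⟩
    have hj1 : s * N ≤ ⌈s * N⌉₊ := Nat.le_ceil _
    have hsN : 0 < s * N := mul_pos hs.1 hNp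
    have hj2 : (⌈s * N⌉₊ : ℝ) < s * N + 1 := Nat.ceil_lt_add_one hsN.le
    have hj3 : ⌈s * N⌉₊ ≤ N := Nat.ceil_le.2 (by nlinarith [hs.2])
    have hj3' : (⌈s * N⌉₊ : ℝ) ≤ N := by exact_mod_cast hj3
    simp only [Set.mem_iUnion, Finset.mem_range, Metric.mem_ball]
    refine ⟨⌈s * N⌉₊, by omega, ?_⟩
    have ht : ((⌈s * N⌉₊ : ℝ) / N) ∈ Set.Ioc (0:ℝ) 1 :=
      ⟨div_pos (by linarith) hNp, (div_le_one hNp).2 hj3'⟩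
    have hd := hl s _ hs ht
    have hb : |s - (⌈s * N⌉₊ : ℝ) / N| ≤ δ := by
      have h2 : 1 / (N:ℝ) ≤ δ := by
        rw [div_le_iff₀ hNp]; rw [div_le_iff₀ h0] at hN1; linarith
      refine le_trans ?_ h2
      rw [abs_sub_comm, abs_of_nonneg]
      · rw [sub_le_iff_le_add, div_le_iff₀ hNp, add_mul, div_mul_cancel₀ _ hNp.ne']; linarith
      · rw [sub_nonneg, le_div_iff₀ hNp]; exact hj1
    have := dist_triangle x (h s) (h ((⌈s * N⌉₊ : ℝ) / N))
    nlinarith [mul_le_mul_of_nonneg_left hb hK]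
  refine (measure_mono hsub).trans ((measure_biUnion_finset_le _ _).trans ?_)
  have hv : ∀ j ∈ Finset.range (N+1), volume (Metric.ball (h ((j:ℝ) / N)) ((1 + K) * δ))
      ≤ ENNReal.ofReal (Real.pi * ((1 + K) * δ)^2) := by
    intro j _
    rw [EuclideanSpace.volume_ball_fin_two, ← ENNReal.ofReal_pow (by positivity), mul_comm (Real.pi),
      ENNReal.ofReal_mul (by positivity)]
  refine (Finset.sum_le_sum hv).trans ?_
  rw [Finset.sum_const, Finset.card_range, ← ENNReal.ofReal_nsmul]
  apply ENNReal.ofReal_le_ofReal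
  rw [nsmul_eq_mul]
  push_cast
  have h3 : ((N:ℝ) + 1) * δ ≤ 3 := by
    have : (N:ℝ) * δ < (1 / δ + 1) * δ := by gcongr
    rw [add_mul, one_div, inv_mul_cancel₀ h0.ne'] at this
    linarith
  have : 0 ≤ Real.pi * (1 + K)^2 * δ := by positivity
  nlinarith

noncomputable def f (φ : ℝ) : ℝ := 1 / (φ * (Real.log φ) ^ 2)

lemma log_ge {φ : ℝ} (h : 2 * Real.pi ≤ φ) : 1 ≤ Real.log φ := by
  have := Real.pi_gt_three
  have := Real.exp_one_lt_d9
  rw [Real.le_log_iff_exp_le (by linarith)]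
  linarith

lemma f_pos {φ : ℝ} (h : 2 * Real.pi ≤ φ) : 0 < f φ := by
  have := log_ge h
  have := Real.pi_gt_three
  have : 0 < φ := by linarith
  unfold f; positivity

lemma f_le {φ : ℝ} (h : 2 * Real.pi ≤ φ) : f φ ≤ 1 / φ := by
  have h1 := log_ge h
  have := Real.pi_gt_three
  have : 0 < φ := by linarith
  unfold f
  gcongr
  exact le_mul_of_one_le_right this.le (one_le_pow₀ h1)

lemma f_cont {φ : ℝ} (h : 2 * Real.pi ≤ φ) : ContinuousAt f φ := by
  have h1 := log_ge h
  have := Real.pi_gt_three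
  have : 0 < φ := by linarith
  unfold f
  have : φ * (Real.log φ) ^ 2 ≠ 0 := by positivity
  have := Real.continuousAt_log (x := φ) (by positivity)
  fun_prop (disch := assumption)

lemma f_anti {φ ψ : ℝ} (h : 2 * Real.pi ≤ φ) (h' : φ ≤ ψ) : f ψ ≤ f φ := by
  have h1 := log_ge h
  have := Real.pi_gt_three
  have : 0 < φ := by linarith
  have : 0 < ψ := by linarith
  unfold f
  gcongr

open Complex in
lemma g_eq {φ : ℝ} (h : 2 * Real.pi ≤ φ) :
    (Real.log φ)⁻¹ ∈ Set.Ioc (0:ℝ) 1 ∧ g (Real.log φ)⁻¹ = f φ * cexp (φ * I) := by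
  have h1 := log_ge h
  have := Real.pi_gt_three
  have hp : 0 < φ := by linarith
  refine ⟨⟨by positivity, inv_le_one_of_one_le₀ h1⟩, ?_⟩
  unfold g f
  have e : cexp ((Real.log φ : ℝ) : ℂ) = φ := by rw [← Complex.ofReal_exp, Real.exp_log hp]
  have hp' : (φ : ℂ) ≠ 0 := by exact_mod_cast hp.ne'
  have hl : ((Real.log φ : ℝ) : ℂ) ≠ 0 := by exact_mod_cast (by positivity)
  rw [Complex.ofReal_inv, inv_inv, Complex.exp_add, Complex.exp_neg, e, mul_comm I]
  push_cast
  field_simp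

/-- The domain in ℂ -/
def EC : Set ℂ := {z | ∃ r φ : ℝ, 2 * Real.pi ≤ φ ∧ f (φ + Real.pi) ≤ r ∧ r < f φ ∧
  z = r * Complex.exp (φ * Complex.I)}

open Complex in
lemma closure_EC {z : ℂ} (hz : z ∈ closure EC) (h0 : z ≠ 0) :
    ∃ r φ : ℝ, 2 * Real.pi ≤ φ ∧ f (φ + Real.pi) ≤ r ∧ r ≤ f φ ∧ z = r * cexp (φ * I) := by
  have hpi := Real.pi_gt_three
  set ε := ‖z‖ / 2 with hε
  have hz0 : 0 < ‖z‖ := norm_pos_iff.2 h0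
  have hεp : 0 < ε := by positivity
  set U : Set ℂ := {w | ε < ‖w‖}
  have hU : IsOpen U := isOpen_lt continuous_const continuous_norm
  have hzU : z ∈ U := by show ε < ‖z‖; linarith
  have h1 : z ∈ closure (U ∩ EC) := hU.inter_closure ⟨hzU, hz⟩
  set P : ℝ × ℝ → ℂ := fun q =>
    (((1 - q.2) * f (q.1 + Real.pi) + q.2 * f q.1 : ℝ) : ℂ) * cexp (q.1 * I) with hP
  set D : Set (ℝ × ℝ) := Set.Icc (2 * Real.pi) (1 / ε) ×ˢ Set.Icc (0:ℝ) 1 with hD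
  have hDc : IsCompact D := isCompact_Icc.prod isCompact_Icc
  have hPc : ContinuousOn P D := by
    intro q hq
    apply ContinuousAt.continuousWithinAt
    have c1 : ContinuousAt (fun q : ℝ × ℝ => f q.1) q :=
      ContinuousAt.comp (f := Prod.fst) (f_cont hq.1.1) continuousAt_fst
    have c2 : ContinuousAt (fun q : ℝ × ℝ => f (q.1 + Real.pi)) q :=
      ContinuousAt.comp (f := fun q : ℝ × ℝ => q.1 + Real.pi)
        (f_cont (by linarith [hq.1.1])) (by fun_prop)
    have c3 : ContinuousAt (fun q : ℝ × ℝ => (1 - q.2) * f (q.1 + Real.pi) + q.2 * f q.1) q := by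
      fun_prop
    have c4 := Complex.continuous_ofReal.continuousAt.comp c3
    have c5 : ContinuousAt (fun q : ℝ × ℝ => cexp (q.1 * I)) q := by fun_prop
    exact c4.mul c5
  have hcl : IsClosed (P '' D) := (hDc.image_of_continuousOn hPc).isClosed
  have hsub : U ∩ EC ⊆ P '' D := by
    rintro w ⟨hw, r, φ, hφ, hr1, hr2, rfl⟩
    have hφp : 0 < φ := by linarith
    have hrp : 0 < r := lt_of_lt_of_le (f_pos (by linarith)) hr1
    have hw' : ε < r := by
      have : ε < ‖(r:ℂ) * cexp (φ * I)‖ := hw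
      rwa [norm_mul, Complex.norm_exp_ofReal_mul_I, mul_one, Complex.norm_real, Real.norm_eq_abs,
        abs_of_pos hrp] at this
    have hlt : ε < 1 / φ := by linarith [f_le hφ]
    have hpos : 0 < f φ - f (φ + Real.pi) := by linarith
    refine ⟨(φ, (r - f (φ + Real.pi)) / (f φ - f (φ + Real.pi))), ⟨⟨hφ, ?_⟩, ?_, ?_⟩, ?_⟩
    · rw [lt_div_iff₀ hφp] at hlt
      show φ ≤ 1 / ε
      rw [le_div_iff₀ hεp]; linarith
    · show 0 ≤ _ / _
      exact div_nonneg (by linarith) hpos.le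
    · show _ / _ ≤ (1:ℝ)
      rw [div_le_one hpos]; linarith
    · simp only [hP]
      congr 2
      field_simp
      ring
  obtain ⟨⟨φ, t⟩, ⟨⟨hφ, _⟩, ht0, ht1⟩, rfl⟩ := hcl.closure_subset_iff.2 hsub h1
  dsimp only at hφ ht0 ht1
  have ha : f (φ + Real.pi) ≤ f φ := f_anti hφ (by linarith)
  exact ⟨_, φ, hφ, by nlinarith, by nlinarith, rfl⟩

open Complex in
lemma interior_EC {r φ : ℝ} (hφ : 2 * Real.pi < φ) (h1 : f (φ + Real.pi) < r) (h2 : r < f φ) :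
    (r * cexp (φ * I) : ℂ) ∈ interior EC := by
  have hpi := Real.pi_gt_three
  have hrp : 0 < r := lt_trans (f_pos (by linarith)) h1
  set p : ℂ := r * cexp (φ * I) with hp
  have hmul : p * cexp (-(φ * I)) = r := by
    rw [hp, mul_assoc, ← Complex.exp_add]; simp
  set A : ℂ → ℝ := fun w => φ + arg (w * cexp (-(φ * I))) with hA
  have hAp : A p = φ := by
    simp only [hA, hmul, Complex.arg_ofReal_of_nonneg hrp.le, add_zero]
  have hnp : ‖p‖ = r := by
    rw [hp, norm_mul, Complex.norm_exp_ofReal_mul_I, mul_one, Complex.norm_real, Real.norm_eq_abs,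
        abs_of_pos hrp]
  have cA : ContinuousAt A p := by
    have : ContinuousAt arg (p * cexp (-(φ * I))) := by
      rw [hmul]; exact Complex.continuousAt_arg (Complex.ofReal_mem_slitPlane.2 hrp)
    exact continuousAt_const.add
      (ContinuousAt.comp (f := fun w : ℂ => w * cexp (-(φ * I))) this (by fun_prop))
  have cf : ContinuousAt (fun w => f (A w)) p :=
    ContinuousAt.comp (g := f) (f := A) (by rw [hAp]; exact f_cont hφ.le) cA
  have cf2 : ContinuousAt (fun w => f (A w + Real.pi)) p :=
    ContinuousAt.comp (g := f) (f := fun w => A w + Real.pi)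
      (by rw [hAp]; exact f_cont (by linarith)) (cA.add continuousAt_const)
  have cn : ContinuousAt (fun w : ℂ => ‖w‖) p := continuous_norm.continuousAt
  rw [mem_interior_iff_mem_nhds]
  have e1 := continuousAt_const.eventually_lt cA (by rw [hAp]; exact hφ)
  have e2 := cf2.eventually_lt cn (by rw [hAp, hnp]; exact h1)
  have e3 := cn.eventually_lt cf (by rw [hAp, hnp]; exact h2)
  filter_upwards [e1, e2, e3] with w w1 w2 w3
  refine ⟨‖w‖, A w, w1.le, w2.le, w3, ?_⟩
  have h := Complex.norm_mul_exp_arg_mul_I (w * cexp (-(φ * I)))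
  have hn : ‖w * cexp (-(φ * I))‖ = ‖w‖ := by
    rw [norm_mul, ← neg_mul, ← Complex.ofReal_neg, Complex.norm_exp_ofReal_mul_I, mul_one]
  rw [hn] at h
  simp only [hA]
  push_cast
  rw [add_mul, Complex.exp_add, mul_left_comm, h, mul_left_comm, ← Complex.exp_add]
  simp

open Complex in
lemma frontier_EC {z : ℂ} (hz : z ∈ frontier EC) :
    ∃ s ∈ Set.Ioc (0:ℝ) 1, z = 0 ∨ z = s ∨ z = g s ∨ z = - g s := by
  have hpi := Real.pi_gt_three
  by_cases h0 : z = 0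
  · exact ⟨1, by simp, Or.inl h0⟩
  obtain ⟨r, φ, hφ, h1, h2, rfl⟩ := closure_EC hz.1 h0
  rcases hφ.eq_or_lt with h | h
  · refine ⟨r, ⟨lt_of_lt_of_le (f_pos (by linarith)) h1, ?_⟩, Or.inr (Or.inl ?_)⟩
    · refine h2.trans ((f_le hφ).trans ?_)
      rw [div_le_one (by linarith)]; linarith
    · rw [← h]; push_cast; rw [Complex.exp_two_pi_mul_I, mul_one]
  rcases h1.eq_or_lt with h1' | h1'
  · have := g_eq (φ := φ + Real.pi) (by linarith)
    refine ⟨_, this.1, Or.inr (Or.inr (Or.inr ?_))⟩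
    rw [this.2, h1']
    push_cast
    rw [add_mul, Complex.exp_add, Complex.exp_pi_mul_I]
    ring
  rcases h2.eq_or_lt with h2' | h2'
  · have := g_eq hφ
    refine ⟨_, this.1, Or.inr (Or.inr (Or.inl ?_))⟩
    rw [this.2, h2']
  · exact absurd (interior_EC h h1' h2') hz.2

lemma frontier_EC_nonempty : (frontier EC).Nonempty := by
  have hpi := Real.pi_gt_three
  by_contra hne
  rw [Set.not_nonempty_iff_eq_empty, ← isClopen_iff_frontier_eq_empty, isClopen_iff] at hne
  rcases hne with h | h
  · have hlt : f (2 * Real.pi + Real.pi) < f (2 * Real.pi) := by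
      have h1 := log_ge (le_refl (2 * Real.pi))
      have h2 : Real.log (2 * Real.pi) ≤ Real.log (2 * Real.pi + Real.pi) :=
        Real.log_le_log (by linarith) (by linarith)
      unfold f
      apply one_div_lt_one_div_of_lt (by positivity)
      have : Real.log (2 * Real.pi) ^ 2 ≤ Real.log (2 * Real.pi + Real.pi) ^ 2 := by gcongr
      have h3 : 0 < Real.log (2 * Real.pi) ^ 2 := by positivity
      nlinarith
    have : (f (2 * Real.pi + Real.pi) * Complex.exp ((2 * Real.pi : ℝ) * Complex.I) : ℂ) ∈ EC :=
      ⟨_, _, le_refl _, le_refl _, hlt, rfl⟩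
    rw [h] at this
    exact this
  · have : (0:ℂ) ∈ EC := h ▸ Set.mem_univ _
    obtain ⟨r, φ, hφ, h1, h2, h3⟩ := this
    have : 0 < r := lt_of_lt_of_le (f_pos (by linarith)) h1
    have h4 := mul_eq_zero.1 h3.symm
    rcases h4 with h4 | h4
    · exact this.ne' (by exact_mod_cast h4)
    · exact Complex.exp_ne_zero _ h4

noncomputable abbrev e : ℂ ≃ₗᵢ[ℝ] EuclideanSpace ℝ (Fin 2) := Complex.orthonormalBasisOneI.repr

lemma pre : e ⁻¹' logSpiral = EC := by
  ext z
  simp only [logSpiral, EC, Set.mem_preimage, Set.mem_ofPred_eq]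
  refine exists_congr fun r => exists_congr fun φ => and_congr_right fun _ => and_congr_right fun _ =>
    and_congr_right fun _ => ?_
  rw [Complex.ext_iff]
  simp [Complex.exp_re, Complex.exp_im]

lemma frontier_pre : e ⁻¹' (frontier logSpiral) = frontier EC := by
  rw [← pre]
  exact e.toHomeomorph.preimage_frontier _

end LogSpiralAux

open LogSpiralAux in
theorem stmt_17 : ∃ C : ℝ, 0 < C ∧ ∀ δ : ℝ, 0 < δ → δ < 1 →
    volume {x : EuclideanSpace ℝ (Fin 2) | Metric.infDist x (frontier logSpiral) < δ}
      ≤ ENNReal.ofReal (C * δ) := by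
  refine ⟨4 * (3 * Real.pi * (1 + 4) ^ 2), by positivity, fun δ h0 h1 => ?_⟩
  have c1 := cover (fun _ => e 0) 4 (by norm_num) (fun s t _ _ => by simp) δ h0 h1
  have c2 := cover (fun s => e (s : ℂ)) 4 (by norm_num) (fun s t _ _ => by
    rw [e.dist_map, Complex.dist_eq, ← Complex.ofReal_sub, Complex.norm_real, Real.norm_eq_abs]
    linarith [abs_nonneg (s - t)]) δ h0 h1
  have c3 := cover (fun s => e (g s)) 4 (by norm_num) (fun s t hs ht => by
    rw [e.dist_map]; exact g_lip s t hs ht) δ h0 h1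
  have c4 := cover (fun s => e (- g s)) 4 (by norm_num) (fun s t hs ht => by
    rw [e.dist_map, dist_neg_neg]; exact g_lip s t hs ht) δ h0 h1
  have hne : (frontier logSpiral).Nonempty := by
    obtain ⟨z, hz⟩ := frontier_EC_nonempty
    rw [← frontier_pre] at hz
    exact ⟨_, hz⟩
  have hsub : {x : EuclideanSpace ℝ (Fin 2) | Metric.infDist x (frontier logSpiral) < δ} ⊆
      (({x | ∃ s ∈ Set.Ioc (0:ℝ) 1, dist x (e 0) < δ} ∪
      {x | ∃ s ∈ Set.Ioc (0:ℝ) 1, dist x (e (s : ℂ)) < δ}) ∪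
      {x | ∃ s ∈ Set.Ioc (0:ℝ) 1, dist x (e (g s)) < δ}) ∪
      {x | ∃ s ∈ Set.Ioc (0:ℝ) 1, dist x (e (- g s)) < δ} := by
    intro x hx
    obtain ⟨y, hy, hxy⟩ := (Metric.infDist_lt_iff hne).1 hx
    obtain ⟨z, rfl⟩ := e.surjective y
    have hz : z ∈ frontier EC := by rw [← frontier_pre]; exact hy
    obtain ⟨s, hs, h | h | h | h⟩ := frontier_EC hz
    · exact Or.inl (Or.inl (Or.inl ⟨s, hs, h ▸ hxy⟩))
    · exact Or.inl (Or.inl (Or.inr ⟨s, hs, h ▸ hxy⟩))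
    · exact Or.inl (Or.inr ⟨s, hs, h ▸ hxy⟩)
    · exact Or.inr ⟨s, hs, h ▸ hxy⟩
  refine (measure_mono hsub).trans ?_
  refine (measure_union_le _ _).trans ((add_le_add ((measure_union_le _ _).trans
    (add_le_add ((measure_union_le _ _).trans (add_le_add c1 c2)) c3)) c4).trans ?_)
  rw [← ENNReal.ofReal_add (by positivity) (by positivity),
    ← ENNReal.ofReal_add (by positivity) (by positivity),
    ← ENNReal.ofReal_add (by positivity) (by positivity)]
  apply ENNReal.ofReal_le_ofReal
  apply le_of_eq
  ring
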